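/- Let H ∈ (0,1). There exists a constant C_H depending only on H such that for every integer n ≥ 1 and every l ∈ {1,…,n}, Σ_{j=1}^n Σ_{k=1}^n |β_{k,l} · β_{j,l}| ≤ C_H · n^{−min(4H, 2)}. -/

import Mathlib

/-- The fBm autocorrelation sequence `ρ_H(k) = (1/2)(|k+1|^{2H} − 2|k|^{2H} + |k−1|^{2H})`. -/
noncomputable def rhoH (H : ℝ) (k : ℤ) : ℝ :=
  (1/2) * (|(k:ℝ) + 1| ^ (2 * H) - 2 * |(k:ℝ)| ^ (2 * H) + |(k:ℝ) - 1| ^ (2 * H))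

/-!
The double sum is the square of `∑ k, |β_{k,l}|`, and since `ρ_H` is even this single sum is at most
`2 n^{-2H} ∑ m < n, |ρ_H(m)|`. For `m ≥ 1`, `2 ρ_H(m)` is the difference of two consecutive
increments of `x ↦ x^{2H}`. The power function is convex or concave, so its increments are monotone
and the sum of `|ρ_H(m)|` telescopes; it grows no faster than the increment `(n+1)^{2H} - n^{2H}`,
hence like `n^{max(0, 2H-1)}`.
-/

section FiniteSums

lemma sum_range_abs_sub_of_monotone {u : ℕ → ℝ} (hu : Monotone u) (n : ℕ) :
    ∑ m ∈ Finset.range n, |u (m + 1) - u m| = |u n - u 0| := by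
  rw [abs_of_nonneg (sub_nonneg.2 (hu n.zero_le)), ← Finset.sum_range_sub]
  exact Finset.sum_congr rfl fun m _ ↦ abs_of_nonneg (sub_nonneg.2 (hu m.le_succ))

lemma sum_range_abs_sub_of_antitone {u : ℕ → ℝ} (hu : Antitone u) (n : ℕ) :
    ∑ m ∈ Finset.range n, |u (m + 1) - u m| = |u n - u 0| := by
  simpa only [Pi.neg_apply, neg_sub_neg, abs_sub_comm] using
    sum_range_abs_sub_of_monotone hu.neg n

lemma sum_sum_abs_mul {ι R : Type*} [CommRing R] [LinearOrder R] [IsStrictOrderedRing R]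
    (s : Finset ι) (u : ι → R) :
    ∑ j ∈ s, ∑ k ∈ s, |u k * u j| = (∑ k ∈ s, |u k|) ^ 2 := by
  simp only [sq, Finset.sum_mul_sum, abs_mul, mul_comm]

variable {M : Type*} [AddCommMonoid M]

lemma sum_Icc_sub_of_even {f : ℤ → M} (hf : f.Even) (a b : ℕ) :
    ∑ k ∈ Finset.Icc 1 (a + b), f (k - a) =
      ∑ m ∈ Finset.range a, f m + ∑ m ∈ Finset.range b, f (m + 1) := by
  rw [← Finset.Ico_add_one_right_eq_Icc, Finset.sum_Ico_eq_sum_range, Nat.add_sub_cancel,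
    Finset.sum_range_add, ← Finset.sum_range_reflect]
  congr 1
  · refine Finset.sum_congr rfl fun m hm ↦ ?_
    have hma : m < a := Finset.mem_range.1 hm
    rw [← hf m]
    congr 1
    omega
  · refine Finset.sum_congr rfl fun m _ ↦ ?_
    congr 1
    omega

lemma sum_Icc_sub_le_two_nsmul_of_even [PartialOrder M] [IsOrderedAddMonoid M] {f : ℤ → M}
    (hf : f.Even) (hf₀ : ∀ k, 0 ≤ f k) {n l : ℕ} (hl : 1 ≤ l) (hln : l ≤ n) :
    ∑ k ∈ Finset.Icc 1 n, f (k - l) ≤ 2 • ∑ m ∈ Finset.range n, f m := by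
  obtain ⟨b, rfl⟩ := Nat.exists_eq_add_of_le hln
  have right_half : ∑ m ∈ Finset.range b, f (m + 1) ≤ ∑ m ∈ Finset.range (b + 1), f m := by
    rw [Finset.sum_range_succ']
    exact le_add_of_nonneg_right (hf₀ 0)
  rw [sum_Icc_sub_of_even hf, two_nsmul]
  refine add_le_add ?_ (right_half.trans ?_) <;>
    exact Finset.sum_le_sum_of_subset_of_nonneg (Finset.range_subset_range.2 (by omega))
      fun m _ _ ↦ hf₀ m

end FiniteSums

section PowerIncrements

lemma monotone_increment_of_convexOn {f : ℝ → ℝ} (hf : ConvexOn ℝ (Set.Ici 0) f) :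
    Monotone fun m : ℕ ↦ f (m + 1) - f m := by
  refine monotone_nat_of_le_succ fun m ↦ ?_
  have hm : (0 : ℝ) ≤ m := m.cast_nonneg
  simpa using hf.slope_mono_adjacent (Set.mem_Ici.2 hm)
    (Set.mem_Ici.2 (by positivity : (0 : ℝ) ≤ (m + 1 : ℕ) + 1)) (y := m + 1) (by simp) (by simp)

lemma antitone_increment_of_concaveOn {f : ℝ → ℝ} (hf : ConcaveOn ℝ (Set.Ici 0) f) :
    Antitone fun m : ℕ ↦ f (m + 1) - f m := by
  simpa [Pi.neg_def, neg_add_eq_sub] using (monotone_increment_of_convexOn hf.neg).neg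

/-- The increment of `t ↦ t ^ p` over `[x, x + 1]`. With `p = 2H`, differences of consecutive
increments give the values of `2 * rhoH H`. -/
noncomputable def rpowIncrement (p x : ℝ) : ℝ := (x + 1) ^ p - x ^ p

lemma rpowIncrement_zero {p : ℝ} (hp : p ≠ 0) : rpowIncrement p 0 = 1 := by
  simp [rpowIncrement, Real.zero_rpow hp]

variable {p x : ℝ}

lemma rpowIncrement_nonneg (hp : 0 ≤ p) (hx : 0 ≤ x) : 0 ≤ rpowIncrement p x :=
  sub_nonneg.2 (Real.rpow_le_rpow hx (by linarith) hp)

lemma rpowIncrement_le_one (hp₀ : 0 ≤ p) (hp₁ : p ≤ 1) (hx : 0 ≤ x) : rpowIncrement p x ≤ 1 := by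
  have := Real.rpow_add_le_add_rpow hx zero_le_one hp₀ hp₁
  rw [Real.one_rpow] at this
  exact sub_left_le_of_le_add this

lemma rpowIncrement_le_mul_rpow (hp : 1 ≤ p) (hx : 0 ≤ x) :
    rpowIncrement p x ≤ p * (x + 1) ^ (p - 1) := by
  have hx₁ : 0 < x + 1 := by linarith
  have bernoulli : 1 + p * (-(1 / (x + 1))) ≤ (1 + -(1 / (x + 1))) ^ p :=
    one_add_mul_self_le_rpow_one_add
      (neg_le_neg ((div_le_one hx₁).2 (by linarith))) hp
  have hx_div : 1 + -(1 / (x + 1)) = x / (x + 1) := by field_simp; ring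
  rw [hx_div, Real.div_rpow hx hx₁.le, le_div_iff₀ (by positivity)] at bernoulli
  rw [rpowIncrement, Real.rpow_sub_one hx₁.ne']
  linear_combination bernoulli

lemma rpowIncrement_le (hp : 0 ≤ p) (hx : 0 ≤ x) :
    rpowIncrement p x ≤ max 1 p * (x + 1) ^ max 0 (p - 1) := by
  rcases le_total p 1 with h | h
  · simpa [h] using rpowIncrement_le_one hp h hx
  · simpa [h] using rpowIncrement_le_mul_rpow h hx

lemma sum_range_abs_sub_rpowIncrement (hp : 0 < p) (n : ℕ) :
    ∑ m ∈ Finset.range n, |rpowIncrement p (m + 1) - rpowIncrement p m| =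
      |rpowIncrement p n - 1| := by
  have telescope : ∑ m ∈ Finset.range n, |rpowIncrement p (m + 1 : ℕ) - rpowIncrement p m| =
      |rpowIncrement p n - rpowIncrement p (0 : ℕ)| := by
    rcases le_total p 1 with h | h
    · exact sum_range_abs_sub_of_antitone
        (antitone_increment_of_concaveOn (Real.concaveOn_rpow hp.le h)) n
    · exact sum_range_abs_sub_of_monotone
        (monotone_increment_of_convexOn (convexOn_rpow h)) n
  simpa only [Nat.cast_add_one, Nat.cast_zero, rpowIncrement_zero hp.ne'] using telescope

end PowerIncrements

section Autocorrelation

variable {H : ℝ}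

lemma rhoH_even (H : ℝ) : (rhoH H).Even := fun k ↦ by
  have h₁ : |-(k : ℝ) + 1| = |(k : ℝ) - 1| := by rw [← abs_neg]; ring_nf
  have h₂ : |-(k : ℝ) - 1| = |(k : ℝ) + 1| := by rw [← abs_neg]; ring_nf
  simp only [rhoH, Int.cast_neg, h₁, h₂, abs_neg]
  ring

lemma rhoH_zero (hH : H ≠ 0) : rhoH H 0 = 1 := by
  norm_num [rhoH, Real.zero_rpow, hH]

lemma rhoH_natCast_add_one (H : ℝ) (m : ℕ) :
    rhoH H (m + 1) = (rpowIncrement (2 * H) (m + 1) - rpowIncrement (2 * H) m) / 2 := by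
  have hm : (0 : ℝ) ≤ m := m.cast_nonneg
  simp only [rhoH, rpowIncrement, Int.cast_add, Int.cast_natCast, Int.cast_one,
    add_sub_cancel_right]
  rw [abs_of_nonneg (by positivity : (0 : ℝ) ≤ m + 1 + 1),
    abs_of_nonneg (by positivity : (0 : ℝ) ≤ m + 1), abs_of_nonneg hm]
  ring

lemma sum_range_succ_abs_rhoH (hH : 0 < H) (n : ℕ) :
    ∑ m ∈ Finset.range (n + 1), |rhoH H m| = 1 + |rpowIncrement (2 * H) n - 1| / 2 := by
  rw [Finset.sum_range_succ', Nat.cast_zero, rhoH_zero hH.ne', abs_one,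
    ← sum_range_abs_sub_rpowIncrement (by positivity), Finset.sum_div, add_comm]
  simp only [Nat.cast_add_one, rhoH_natCast_add_one, abs_div, abs_two]

lemma sum_range_abs_rhoH_le (hH : 0 < H) {n : ℕ} (hn : n ≠ 0) :
    ∑ m ∈ Finset.range n, |rhoH H m| ≤
      (1 + max 1 (2 * H) / 2) * (n : ℝ) ^ max 0 (2 * H - 1) := by
  obtain ⟨n, rfl⟩ := Nat.exists_eq_succ_of_ne_zero hn
  rw [Nat.succ_eq_add_one, sum_range_succ_abs_rhoH hH, Nat.cast_add_one]
  set Δ := rpowIncrement (2 * H) n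
  set P := ((n : ℝ) + 1) ^ max 0 (2 * H - 1)
  have hn₀ : (0 : ℝ) ≤ n := n.cast_nonneg
  have hP : 1 ≤ P := Real.one_le_rpow (by linarith) (le_max_left _ _)
  have hΔ₀ : 0 ≤ Δ := rpowIncrement_nonneg (by positivity) hn₀
  have hΔ : Δ ≤ max 1 (2 * H) * P := rpowIncrement_le (by positivity) hn₀
  have hone : 1 ≤ max 1 (2 * H) * P := one_le_mul_of_one_le_of_one_le (le_max_left _ _) hP
  have habs : |Δ - 1| ≤ max 1 (2 * H) * P := abs_le.2 ⟨by linarith, by linarith⟩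
  linarith

lemma sum_Icc_abs_rhoH_sub_le (hH : 0 < H) {n l : ℕ} (hl : 1 ≤ l) (hln : l ≤ n) :
    ∑ k ∈ Finset.Icc 1 n, |rhoH H (k - l)| ≤
      (2 + max 1 (2 * H)) * (n : ℝ) ^ max 0 (2 * H - 1) := by
  have heven : (fun k ↦ |rhoH H k|).Even := fun k ↦ congrArg abs (rhoH_even H k)
  calc ∑ k ∈ Finset.Icc 1 n, |rhoH H (k - l)|
      ≤ 2 • ∑ m ∈ Finset.range n, |rhoH H m| :=
        sum_Icc_sub_le_two_nsmul_of_even heven (fun _ ↦ abs_nonneg _) hl hln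
    _ ≤ 2 • ((1 + max 1 (2 * H) / 2) * (n : ℝ) ^ max 0 (2 * H - 1)) :=
        nsmul_le_nsmul_right (sum_range_abs_rhoH_le hH (by omega)) 2
    _ = (2 + max 1 (2 * H)) * (n : ℝ) ^ max 0 (2 * H - 1) := by
        rw [nsmul_eq_mul]; push_cast; ring

lemma sum_Icc_abs_rpow_mul_rhoH_sub_le (hH : 0 < H) {n l : ℕ} (hl : 1 ≤ l) (hln : l ≤ n) :
    ∑ k ∈ Finset.Icc 1 n, |(n : ℝ) ^ (-(2 * H)) * rhoH H (k - l)| ≤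
      (2 + max 1 (2 * H)) * (n : ℝ) ^ (-min (2 * H) 1) := by
  have hn : (0 : ℝ) < n := by exact_mod_cast hl.trans hln
  have hexp : -min (2 * H) 1 = -(2 * H) + max 0 (2 * H - 1) := by grind
  simp only [abs_mul, abs_of_pos (Real.rpow_pos_of_pos hn _), ← Finset.mul_sum]
  rw [hexp, Real.rpow_add hn, mul_left_comm]
  gcongr
  exact sum_Icc_abs_rhoH_sub_le hH hl hln

end Autocorrelation

theorem stmt11_general {H : ℝ} (hH : 0 < H) {n l : ℕ} (hl : 1 ≤ l) (hln : l ≤ n) :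
    (∑ j ∈ Finset.Icc 1 n, ∑ k ∈ Finset.Icc 1 n,
        |((n:ℝ) ^ (-(2 * H)) * rhoH H ((k:ℤ) - (l:ℤ)))
          * ((n:ℝ) ^ (-(2 * H)) * rhoH H ((j:ℤ) - (l:ℤ)))|)
      ≤ (2 + max 1 (2 * H)) ^ 2 * (n:ℝ) ^ (-(min (4 * H) 2)) := by
  have hexp : -min (4 * H) 2 = -min (2 * H) 1 * (2 : ℕ) := by push_cast; grind
  rw [sum_sum_abs_mul, hexp, Real.rpow_mul_natCast n.cast_nonneg, ← mul_pow]
  gcongr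
  exact sum_Icc_abs_rpow_mul_rhoH_sub_le hH hl hln

/-- Lemma 8 (e): for `H ∈ (0,1)` there is a constant `C_H` such that for all `n ≥ 1` and
`l ∈ {1,…,n}`, `Σ_{j,k=1}^n |β_{k,l}·β_{j,l}| ≤ C_H · n^{−min(4H,2)}`,
where `β_{j,k} = n^{−2H} ρ_H(j−k)`. -/
theorem stmt11 (H : ℝ) (hH : H ∈ Set.Ioo (0:ℝ) 1) :
    ∃ C : ℝ, 0 < C ∧ ∀ n : ℕ, 1 ≤ n → ∀ l : ℕ, 1 ≤ l → l ≤ n →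
      (∑ j ∈ Finset.Icc 1 n, ∑ k ∈ Finset.Icc 1 n,
          |((n:ℝ) ^ (-(2 * H)) * rhoH H ((k:ℤ) - (l:ℤ)))
            * ((n:ℝ) ^ (-(2 * H)) * rhoH H ((j:ℤ) - (l:ℤ)))|)
        ≤ C * (n:ℝ) ^ (-(min (4 * H) 2)) :=
  ⟨(2 + max 1 (2 * H)) ^ 2, by positivity, fun _ _ _ ↦ stmt11_general hH.1⟩
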